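/- Let $\mathbb{R}_{\max}=\mathbb{R}\cup\{-\infty\}$, and for a $d\times d$ matrix $M$ and a vector $v$ over $\mathbb{R}_{\max}$ put $(M\otimes v)_i=\max_j(M_{ij}+v_j)$. Let $(A(n))_{n\in\mathbb{Z}}$ be a stationary and ergodic sequence of random $d\times d$ matrices with entries in $\mathbb{R}_{\max}$, almost surely having at least one finite entry on each row, such that the positive part of $\max_{ij}A_{ij}(0)$ is integrable. Let $0$ denote the zero vector and put $y(n,0):=A(-1)\otimes\cdots\otimes A(-n)\otimes 0$. Let $\mathcal{G}(A)$ be the directed graph on $\{1,\dots,d\}$ with an arc $(i,j)$ whenever $\mathbb{P}(A_{ij}(0)\neq-\infty)>0$. Its strongly connected components are the classes of mutually reachable nodes, every node being reachable from itself (so a node lying on no circuit is alone in its component). Write $i\to c$ if $i\in c$ or there is a path in $\mathcal{G}(A)$ from $i$ to a node of the component $c$. For each strongly connected component $c$ put $A^{(c)}(n):=(A_{ij}(n))_{i,j\in c}$ and $x^{(c)}(n,0):=A^{(c)}(n-1)\otimes\cdots\otimes A^{(c)}(0)\otimes 0$, and let $\gamma^{(c)}\in\mathbb{R}\cup\{-\infty\}$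 be the maximal Lyapunov exponent of $A^{(c)}$, that is, the constant to which $\frac1n\max_{i\in c}x^{(c)}_i(n,0)$ converges almost surely (this limit exists under the above hypotheses). If $\frac1n\,y(n,0)$ converges almost surely to a deterministic (almost surely constant) vector $L$, then for every $i\in\{1,\dots,d\}$, $$L_i=\max\{\gamma^{(c)} : c \text{ a strongly connected component of } \mathcal{G}(A) \text{ with } i\to c\}.$$ -/

import Mathlib

open Filter MeasureTheory Topology

noncomputable section

/-- Square matrices over `ℝ_max = ℝ ∪ {-∞}`, with entries in `EReal`; `-∞` is `⊥`, and the value `⊤`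
is excluded by hypothesis wherever it matters. The σ-algebra is the product one. -/
abbrev MPMatrix (ι : Type*) := ι → ι → EReal

/-- Max-plus product of a matrix and a vector: `(M ⊗ v) i = max_j (M i j + v j)`. -/
def mpVec {ι : Type*} (M : MPMatrix ι) (v : ι → EReal) : ι → EReal :=
  fun i => ⨆ j, M i j + v j

/-- `mpOrbit a s n = a (s+n-1) ⊗ ⋯ ⊗ a (s+1) ⊗ a s ⊗ 0`. -/
def mpOrbit {ι : Type*} (a : ℤ → MPMatrix ι) (s : ℤ) : ℕ → ι → EReal
  | 0 => fun _ => 0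
  | n + 1 => mpVec (a (s + n)) (mpOrbit a s n)

/-- `x(n,0) = a (n-1) ⊗ ⋯ ⊗ a 0 ⊗ 0`. -/
def xVec {ι : Type*} (a : ℤ → MPMatrix ι) (n : ℕ) : ι → EReal := mpOrbit a 0 n

/-- `y(n,0) = a (-1) ⊗ ⋯ ⊗ a (-n) ⊗ 0`. -/
def yVec {ι : Type*} (a : ℤ → MPMatrix ι) (n : ℕ) : ι → EReal := mpOrbit a (-(n : ℤ)) n

/-- A two-sided random sequence is stationary and ergodic: its law on the sequence space is
invariant and ergodic under the shift. -/
def StationaryErgodic {Ω S : Type*} [MeasurableSpace Ω] [MeasurableSpace S]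
    (μ : Measure Ω) (X : ℤ → Ω → S) : Prop :=
  Ergodic (fun (s : ℤ → S) (n : ℤ) => s (n + 1)) (μ.map (fun ω n => X n ω))

/-- `g` is the almost sure limit of `(1/n) max_i x_i(n,0)`. -/
def IsMaxLyapunov {Ω ι : Type*} [MeasurableSpace Ω] (μ : Measure Ω)
    (A : ℤ → Ω → MPMatrix ι) (g : EReal) : Prop :=
  ∀ᵐ ω ∂μ, Tendsto (fun n : ℕ => (⨆ i, xVec (fun k => A k ω) n i) / (n : EReal)) atTop (𝓝 g)

open Classical in
/-- The maximal Lyapunov exponent `γ(A)`: the constant which is the almost sure limit of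
`(1/n) max_i x_i(n,0)` (by convention `⊥` if there is no such constant). -/
def maxLyapunov {Ω ι : Type*} [MeasurableSpace Ω] (μ : Measure Ω)
    (A : ℤ → Ω → MPMatrix ι) : EReal :=
  if h : ∃ g, IsMaxLyapunov μ A g then h.choose else ⊥

/-- The submatrices `A^{(c)}(n) = (A_{ij}(n))_{i,j ∈ c}`. -/
def subMatrix {Ω ι : Type*} (A : ℤ → Ω → MPMatrix ι) (c : Set ι) : ℤ → Ω → MPMatrix c :=
  fun n ω i j => A n ω i j

/-- Arcs of the graph `𝒢(A)`. -/
def arcRel {Ω ι : Type*} [MeasurableSpace Ω] (μ : Measure Ω)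
    (A : ℤ → Ω → MPMatrix ι) (i j : ι) : Prop :=
  0 < μ {ω | A 0 ω i j ≠ ⊥}

/-- `c` is a strongly connected component of the graph with arcs `r`: the mutual-reachability class
of a node. Paths may have length zero, so a node on no circuit is alone in its class. -/
def IsSCC {ι : Type*} (r : ι → ι → Prop) (c : Set ι) : Prop :=
  ∃ i, c = {j | Relation.ReflTransGen r i j ∧ Relation.ReflTransGen r j i}

/-- `i → c`: `i ∈ c`, or there is a path from `i` to a node of `c`. -/
def Reaches {ι : Type*} (r : ι → ι → Prop) (i : ι) (c : Set ι) : Prop :=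
  ∃ j ∈ c, Relation.ReflTransGen r i j

end

/-!
For each `n` the vectors `x(n,0)` and `y(n,0)` have the same law, so a deterministic limit `L` of
`y(n,0) / n` inherits every closed almost sure asymptotic bound on `x(n,0) / n`, even where the
latter sequence does not converge.

Lower bound on `L`: the restriction of `x(n,0)` to a component `c` grows at rate `γ^{(c)}`, so some
`L j` with `j ∈ c` is at least `γ^{(c)}`; and `L` does not increase along the arcs of the graph, by
the recursion for `y` at its last step.

Upper bound on `L`: the slope bounds of Kingman's subadditive ergodic theorem hold uniformly over
the segments of an orbit, up to a sublinear error. An optimal path can therefore be cut at its exit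
from a component, and induction on the set of nodes reachable from `i` bounds the growth of
`x_i(n,0)` by the largest exponent of a component reachable from `i`.
-/

section GrowthRates

theorem ereal_div_natCast_le_coe_iff {a : EReal} {n : ℕ} (hn : 0 < n) (c : ℝ) :
    a / (n : EReal) ≤ c ↔ a ≤ ((c * n : ℝ) : EReal) := by
  rw [EReal.div_le_iff_le_mul (by exact_mod_cast hn) (EReal.natCast_ne_top n), mul_comm]
  norm_cast

theorem coe_le_ereal_div_natCast_iff {a : EReal} {n : ℕ} (hn : 0 < n) (c : ℝ) :
    c ≤ a / (n : EReal) ↔ ((c * n : ℝ) : EReal) ≤ a := by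
  rw [EReal.le_div_iff_mul_le (by exact_mod_cast hn) (EReal.natCast_ne_top n)]
  norm_cast

theorem frequently_le_mul_of_liminf_div_lt {u : ℕ → EReal} {q : ℝ}
    (h : liminf (fun n : ℕ => u n / (n : EReal)) atTop < q) :
    ∃ᶠ n : ℕ in atTop, u n ≤ ((q * n : ℝ) : EReal) :=
  ((frequently_lt_of_liminf_lt (by isBoundedDefault) h).and_eventually (eventually_gt_atTop 0)).mono
    fun _ ⟨hn, hpos⟩ => (ereal_div_natCast_le_coe_iff hpos q).1 hn.le

theorem exists_le_mul_of_liminf_div_lt {u : ℕ → EReal} {q : ℝ}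
    (h : liminf (fun n : ℕ => u n / (n : EReal)) atTop < q) :
    ∃ l : ℕ, 0 < l ∧ u l ≤ ((q * l : ℝ) : EReal) :=
  let ⟨l, hl, hpos⟩ :=
    ((frequently_le_mul_of_liminf_div_lt h).and_eventually (eventually_gt_atTop 0)).exists
  ⟨l, hpos, hl⟩

theorem eventually_le_mul_natCast {q : ℝ} (hq : 0 < q) (C : ℝ) : ∀ᶠ n : ℕ in atTop, C ≤ q * n :=
  (tendsto_natCast_atTop_atTop.const_mul_atTop hq).eventually_ge_atTop C

theorem liminf_div_natCast_le_of_le_add {u v : ℕ → EReal} (C : ℝ) (k l : ℕ)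
    (h : ∀ n, u (n + k) ≤ C + v (n + l)) :
    liminf (fun n : ℕ => u n / (n : EReal)) atTop ≤
      liminf (fun n : ℕ => v n / (n : EReal)) atTop := by
  refine EReal.le_of_forall_lt_iff_le.1 fun q hq => ?_
  obtain ⟨r, hvr, hrq⟩ := EReal.lt_iff_exists_real_btwn.1 hq
  replace hrq : 0 < q - r := sub_pos.2 (EReal.coe_lt_coe_iff.1 hrq)
  rw [← liminf_nat_add _ l] at hvr
  rw [← liminf_nat_add _ k]
  refine liminf_le_of_frequently_le' (((frequently_lt_of_liminf_lt (by isBoundedDefault)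
    hvr).and_eventually ((eventually_le_mul_natCast hrq (C + r * l - q * k)).and
      (eventually_gt_atTop 0))).mono ?_)
  rintro n ⟨hv, hn, hpos⟩
  replace hv := (ereal_div_natCast_le_coe_iff (by lia) r).1 hv.le
  rw [ereal_div_natCast_le_coe_iff (by lia)]
  refine (h n).trans ((add_le_add le_rfl hv).trans ?_)
  rw [← EReal.coe_add, EReal.coe_le_coe_iff]
  push_cast
  linarith

end GrowthRates

section ErgodicTheory

variable {X : Type*} {T : X → X}

theorem birkhoffSum_nonneg {f : X → ℝ} (hf : ∀ x, 0 ≤ f x) (n : ℕ) (x : X) :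
    0 ≤ birkhoffSum T f n x :=
  Finset.sum_nonneg fun _ _ => hf _

theorem birkhoffSum_iterate_le {f : X → ℝ} (hf : ∀ x, 0 ≤ f x) (x : X) {l m n : ℕ}
    (h : l + m ≤ n) : birkhoffSum T f m (T^[l] x) ≤ birkhoffSum T f n x := by
  obtain ⟨k, rfl⟩ := Nat.exists_eq_add_of_le h
  rw [birkhoffSum_add, birkhoffSum_add]
  linarith [birkhoffSum_nonneg (T := T) hf l x, birkhoffSum_nonneg (T := T) hf k (T^[l + m] x)]

/-- Subadditive processes over `T`, in the sense of Kingman's subadditive ergodic theorem, with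
values in `[-∞, ∞]`. -/
structure SubadditiveProcess (T : X → X) (g : ℕ → X → EReal) : Prop where
  zero_le : ∀ x, g 0 x ≤ 0
  add_le : ∀ m n x, g (m + n) x ≤ g m x + g n (T^[m] x)

namespace SubadditiveProcess

theorem of_birkhoffSum (T : X → X) (f : X → ℝ) :
    SubadditiveProcess T fun n x => ((birkhoffSum T f n x : ℝ) : EReal) where
  zero_le x := by simp
  add_le m n x := by rw [birkhoffSum_add, EReal.coe_add]

theorem ite_eq_zero {f : X → EReal} (hf : ∀ x, 0 ≤ f x) :
    SubadditiveProcess T fun n x => if n = 0 then 0 else f x where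
  zero_le x := by simp
  add_le m n x := by
    rcases m.eq_zero_or_pos with rfl | hm
    · simp
    · simp only [hm.ne', Nat.add_eq_zero_iff, false_and, if_false]
      exact le_add_of_nonneg_right (by split_ifs <;> simp [hf])

theorem le_birkhoffSum {g : ℕ → X → EReal} (hg : SubadditiveProcess T g) {f : X → ℝ} {x : X}
    (hx : ∀ k, g 1 (T^[k] x) ≤ f (T^[k] x)) (n : ℕ) :
    g n x ≤ ((birkhoffSum T f n x : ℝ) : EReal) := by
  induction n with
  | zero => simpa using hg.zero_le x
  | succ n ih =>
    rw [birkhoffSum_succ, EReal.coe_add]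
    exact (hg.add_le n 1 x).trans (add_le_add ih (hx n))

/-- Greedy covering: starting from `x`, jump along a segment of slope at most `γ` when outside `B`
and at distance more than `N` from the end of the orbit segment, and by a single step otherwise.
The term `K * min m N` pays for the at most `N` single steps near the end. -/
theorem le_add_birkhoffSum_of_forall_notMem_exists {g : ℕ → X → EReal}
    (hg : SubadditiveProcess T g) {f F : X → ℝ} {γ K : ℝ} {N : ℕ} {B : Set X} (hK : 0 ≤ K)
    (hF : ∀ x, 0 ≤ F x) (hfK : ∀ x, f x ≤ γ + K + F x) (hfB : ∀ x ∈ B, f x ≤ γ + F x)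
    (hB : ∀ x ∉ B, ∃ l, 0 < l ∧ l ≤ N ∧ g l x ≤ ((γ * l : ℝ) : EReal)) {x : X}
    (hx : ∀ k, g 1 (T^[k] x) ≤ f (T^[k] x)) (m : ℕ) :
    g m x ≤ ((γ * m + K * min (m : ℝ) N + birkhoffSum T F m x : ℝ) : EReal) := by
  induction m using Nat.strong_induction_on generalizing x with
  | _ m ih =>
  rcases Nat.eq_zero_or_pos m with rfl | hm
  · simpa using hg.zero_le x
  obtain ⟨l, k, hl, rfl, hlk⟩ : ∃ l k, 0 < l ∧ m = l + k ∧
      g l x ≤ ((γ * l + K * (min (m : ℝ) N - min (k : ℝ) N) + birkhoffSum T F l x : ℝ) :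
        EReal) := by
    have hmin {l k : ℕ} (h : m = l + k) : 0 ≤ K * (min (m : ℝ) N - min (k : ℝ) N) :=
      mul_nonneg hK (sub_nonneg.2 (min_le_min (by exact_mod_cast (by lia : k ≤ m)) le_rfl))
    obtain ⟨k, rfl⟩ : ∃ k, m = 1 + k := Nat.exists_eq_add_of_le hm
    by_cases hxB : x ∈ B
    · refine ⟨1, k, one_pos, rfl, (hx 0).trans (EReal.coe_le_coe_iff.2 ?_)⟩
      rw [Function.iterate_zero_apply, birkhoffSum_one, Nat.cast_one]
      linarith [hfB x hxB, hmin rfl]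
    rcases le_or_gt (1 + k) N with hmN | hmN
    · refine ⟨1, k, one_pos, rfl, (hx 0).trans (EReal.coe_le_coe_iff.2 ?_)⟩
      have hmN' : ((1 + k : ℕ) : ℝ) ≤ N := by exact_mod_cast hmN
      rw [min_eq_left hmN', min_eq_left (by push_cast at hmN'; linarith)]
      rw [Function.iterate_zero_apply, birkhoffSum_one, Nat.cast_add, Nat.cast_one]
      linarith [hfK x]
    · obtain ⟨l, hl, hlN, hgl⟩ := hB x hxB
      obtain ⟨j, hj⟩ := Nat.exists_eq_add_of_le (hlN.trans hmN.le)
      refine ⟨l, j, hl, hj, hgl.trans (EReal.coe_le_coe_iff.2 ?_)⟩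
      linarith [hmin hj, birkhoffSum_nonneg (T := T) hF l x]
  have hk := ih k (by lia) (x := T^[l] x) fun j => by
    rw [← Function.iterate_add_apply]; exact hx _
  refine (hg.add_le l k x).trans ((add_le_add hlk hk).trans (le_of_eq ?_))
  rw [← EReal.coe_add, birkhoffSum_add]
  congr 1
  push_cast
  ring

end SubadditiveProcess

/-- The values of `g` on the segments of the orbit of `x` inside `[0, n]` grow at most at rate `q`,
up to an error that is sublinear in `n`. Since the error is uniform in the position of the segment,
such bounds can be chained. -/
def SegmentSlopeLE (T : X → X) (g : ℕ → X → EReal) (q : ℝ) (x : X) : Prop :=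
  ∀ ε > 0, ∀ᶠ n : ℕ in atTop, ∀ l m : ℕ, l + m ≤ n →
    g m (T^[l] x) ≤ ((q * m + ε * n : ℝ) : EReal)

theorem SegmentSlopeLE.limsup_div_le {g : ℕ → X → EReal} {q : ℝ} {x : X}
    (h : SegmentSlopeLE T g q x) : limsup (fun n : ℕ => g n x / (n : EReal)) atTop ≤ q := by
  refine EReal.le_of_forall_lt_iff_le.1 fun p hp => limsup_le_of_le (by isBoundedDefault) ?_
  filter_upwards [h (p - q) (sub_pos.2 (EReal.coe_lt_coe_iff.1 hp)), eventually_gt_atTop 0]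
    with n hn hpos
  rw [ereal_div_natCast_le_coe_iff hpos]
  refine (hn 0 n n.zero_add.le).trans_eq ?_
  congr 1
  ring

variable [MeasurableSpace X] {ν : Measure X}

theorem ae_iterate {p : X → Prop} (hT : MeasurePreserving T ν ν) (h : ∀ᵐ x ∂ν, p x) :
    ∀ᵐ x ∂ν, ∀ k, p (T^[k] x) :=
  ae_all_iff.2 fun k => (hT.iterate k).quasiMeasurePreserving.ae h

theorem integrable_birkhoffSum {f : X → ℝ} (hT : MeasurePreserving T ν ν) (hf : Integrable f ν)
    (n : ℕ) : Integrable (birkhoffSum T f n) ν :=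
  integrable_finsetSum _ fun k _ => (hT.iterate k).integrable_comp_of_integrable hf

theorem integral_birkhoffSum {f : X → ℝ} (hT : MeasurePreserving T ν ν) (hf : Integrable f ν)
    (n : ℕ) : ∫ x, birkhoffSum T f n x ∂ν = n * ∫ x, f x ∂ν := by
  have hcomp (k : ℕ) : ∫ x, f (T^[k] x) ∂ν = ∫ x, f x ∂ν := by
    have hk := hT.iterate k
    rw [← integral_map hk.aemeasurable (hk.map_eq.symm ▸ hf.aestronglyMeasurable), hk.map_eq]
  refine (integral_finsetSum _ fun k _ =>
    (hT.iterate k).integrable_comp_of_integrable hf).trans ?_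
  simp only [Function.comp_apply, hcomp, Finset.sum_const, Finset.card_range, nsmul_eq_mul]

theorem exists_integral_posPart_sub_lt {f : X → ℝ} (hf : Integrable f ν) {ε : ℝ} (hε : 0 < ε) :
    ∃ K : ℝ, 0 ≤ K ∧ ∫ x, max (f x - K) 0 ∂ν < ε := by
  have hlim : Tendsto (fun n : ℕ => ∫ x, max (f x - n) 0 ∂ν) atTop (𝓝 (∫ _, (0 : ℝ) ∂ν)) := by
    refine tendsto_integral_of_dominated_convergence (fun x => |f x|)
      (fun n => (hf.aestronglyMeasurable.sub aestronglyMeasurable_const).sup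
        aestronglyMeasurable_const) hf.abs
      (fun n => ae_of_all _ fun x => ?_) (ae_of_all _ fun x => ?_)
    · rw [Real.norm_eq_abs, abs_of_nonneg (le_max_right _ _)]
      exact max_le ((sub_le_self _ n.cast_nonneg).trans (le_abs_self _)) (abs_nonneg _)
    · refine tendsto_const_nhds.congr' ?_
      filter_upwards [tendsto_natCast_atTop_atTop.eventually_ge_atTop (f x)] with n hn
      exact (max_eq_right (sub_nonpos.2 hn)).symm
  rw [integral_zero] at hlim
  obtain ⟨n, hn⟩ := (hlim.eventually_lt_const hε).exists
  exact ⟨n, n.cast_nonneg, hn⟩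

theorem exists_integral_indicator_lt {f : X → ℝ} (hf : Integrable f ν) {B : ℕ → Set X}
    (hBm : ∀ n, NullMeasurableSet (B n) ν) (hB : ∀ᵐ x ∂ν, ∀ᶠ n in atTop, x ∉ B n) {ε : ℝ}
    (hε : 0 < ε) : ∃ n, ∫ x, (B n).indicator f x ∂ν < ε := by
  have hlim : Tendsto (fun n => ∫ x, (B n).indicator f x ∂ν) atTop (𝓝 (∫ _, (0 : ℝ) ∂ν)) := by
    refine tendsto_integral_of_dominated_convergence (fun x => |f x|)
      (fun n => hf.aestronglyMeasurable.indicator₀ (hBm n)) hf.abs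
      (fun n => ae_of_all _ fun x => norm_indicator_le_norm_self f x) ?_
    filter_upwards [hB] with x hx
    exact tendsto_const_nhds.congr' (hx.mono fun n hn => (Set.indicator_of_notMem hn f).symm)
  rw [integral_zero] at hlim
  exact (hlim.eventually_lt_const hε).exists

theorem ae_forall_pos_of_forall_pos_ae {p : ℝ → X → Prop}
    (hmono : ∀ x ε ε', ε ≤ ε' → p ε x → p ε' x) (h : ∀ ε > 0, ∀ᵐ x ∂ν, p ε x) :
    ∀ᵐ x ∂ν, ∀ ε > 0, p ε x := by
  filter_upwards [ae_all_iff.2 fun n : ℕ => h (1 / (n + 1)) Nat.one_div_pos_of_nat] with x hx ε hε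
  obtain ⟨n, hn⟩ := exists_nat_one_div_lt hε
  exact hmono x _ ε hn.le (hx n)

/-- The essential supremum is the only candidate, and each superlevel set is null or conull. -/
theorem exists_ae_eq_const_of_ae_le_comp [IsFiniteMeasure ν] {β : Type*} [CompleteLinearOrder β]
    [TopologicalSpace β] [OrderTopology β] [FirstCountableTopology β] [MeasurableSpace β]
    [OpensMeasurableSpace β] (hT : Ergodic T ν) {φ : X → β} (hφ : AEMeasurable φ ν)
    (hle : ∀ᵐ x ∂ν, φ x ≤ φ (T x)) : ∃ γ, ∀ᵐ x ∂ν, φ x = γ := by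
  have hge : ∀ᵐ x ∂ν, essSup φ ν ≤ φ x := by
    refine (ae_const_le_iff_forall_lt_measure_zero φ _).2 fun b hb => ?_
    rcases hT.ae_empty_or_univ_of_ae_le_preimage (hφ.nullMeasurable measurableSet_Ioi)
      (hle.mono fun x hx hbx => lt_of_lt_of_le hbx hx : φ ⁻¹' Set.Ioi b ≤ᵐ[ν] _) with h | h
    · refine absurd (essSup_le_of_ae_le b ?_) hb.not_ge
      filter_upwards [h.mem_iff] with x hx
      exact not_lt.1 hx.1
    · refine measure_eq_zero_iff_ae_notMem.2 ?_
      filter_upwards [h.mem_iff] with x hx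
      exact not_le.2 (hx.2 trivial)
  exact ⟨essSup φ ν, by
    filter_upwards [ae_le_essSup (μ := ν) (f := φ), hge] with x h₁ h₂ using h₁.antisymm h₂⟩

theorem exists_integrable_forall_le_add_of_eventually_notMem [IsFiniteMeasure ν] {h : X → ℝ}
    (hh : Integrable h ν) (hh0 : ∀ x, 0 ≤ h x) {B : ℕ → Set X}
    (hBm : ∀ n, NullMeasurableSet (B n) ν) (hB : ∀ᵐ x ∂ν, ∀ᶠ n in atTop, x ∉ B n) {ε : ℝ}
    (hε : 0 < ε) :
    ∃ (N : ℕ) (K : ℝ) (F : X → ℝ), 0 ≤ K ∧ Integrable F ν ∧ (∀ x, 0 ≤ F x) ∧ ∫ x, F x ∂ν < ε ∧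
      (∀ x, h x ≤ K + F x) ∧ ∀ x ∈ B N, h x ≤ F x := by
  obtain ⟨N, hNε⟩ := exists_integral_indicator_lt hh hBm hB (half_pos hε)
  obtain ⟨K, hK, hKε⟩ := exists_integral_posPart_sub_lt hh (half_pos hε)
  have hNi : Integrable ((B N).indicator h) ν := hh.indicator₀ (hBm N)
  have hKi : Integrable (fun x => max (h x - K) 0) ν := (hh.sub (integrable_const K)).pos_part
  have hN0 (x : X) : 0 ≤ (B N).indicator h x := Set.indicator_nonneg (fun x _ => hh0 x) x
  have hK0 (x : X) : 0 ≤ max (h x - K) 0 := le_max_right _ _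
  refine ⟨N, K, fun x => (B N).indicator h x + max (h x - K) 0, hK, hNi.add hKi,
    fun x => add_nonneg (hN0 x) (hK0 x), ?_, fun x => ?_, fun x hx => ?_⟩
  · rw [integral_add hNi hKi]
    linarith
  · linarith [hN0 x, le_max_left (h x - K) 0]
  · linarith [hK0 x, Set.indicator_of_mem hx h]

namespace SubadditiveProcess

variable {g : ℕ → X → EReal} {f : X → ℝ}

theorem exists_forall_le_add_birkhoffSum [IsFiniteMeasure ν] (hg : SubadditiveProcess T g)
    (hT : MeasurePreserving T ν ν) (hgm : ∀ n, AEMeasurable (g n) ν) (hf : Integrable f ν)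
    (hgf : ∀ᵐ x ∂ν, g 1 x ≤ f x) {γ : ℝ}
    (hγ : ∀ᵐ x ∂ν, ∃ l : ℕ, 0 < l ∧ g l x ≤ ((γ * l : ℝ) : EReal)) {ε : ℝ} (hε : 0 < ε) :
    ∃ (C : ℝ) (F : X → ℝ), Integrable F ν ∧ (∀ x, 0 ≤ F x) ∧ ∫ x, F x ∂ν < ε ∧
      ∀ᵐ x ∂ν, ∀ m : ℕ, g m x ≤ ((γ * m + C + birkhoffSum T F m x : ℝ) : EReal) := by
  set B : ℕ → Set X := fun N => {x | ∀ l, 0 < l → l ≤ N → ((γ * l : ℝ) : EReal) < g l x}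
  have hBm (N : ℕ) : NullMeasurableSet (B N) ν := by
    simp only [B, Set.ofPred_forall]
    exact .iInter fun l => .iInter fun _ => .iInter fun _ =>
      nullMeasurableSet_lt aemeasurable_const (hgm l)
  have hB : ∀ᵐ x ∂ν, ∀ᶠ N in atTop, x ∉ B N := by
    filter_upwards [hγ] with x ⟨l, hl, hgl⟩
    filter_upwards [eventually_ge_atTop l] with N hN hx
    exact (hx l hl hN).not_ge hgl
  obtain ⟨N, K, F, hK, hF, hF0, hFε, hKF, hBF⟩ :=
    exists_integrable_forall_le_add_of_eventually_notMem (h := fun x => |f x| + |γ|)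
      (hf.abs.add (integrable_const _)) (fun x => by positivity) hBm hB hε
  refine ⟨K * N, F, hF, hF0, hFε, ?_⟩
  filter_upwards [ae_iterate hT hgf] with x hx m
  refine (hg.le_add_birkhoffSum_of_forall_notMem_exists (γ := γ) (N := N) (B := B N) hK hF0
    (fun x => ?_) (fun x hxB => ?_) (fun x hxB => ?_) hx m).trans (EReal.coe_le_coe_iff.2 ?_)
  · linarith [hKF x, le_abs_self (f x), neg_abs_le γ]
  · linarith [hBF x hxB, le_abs_self (f x), neg_abs_le γ]
  · simpa [B] using hxB
  · gcongr
    exact min_le_right _ _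

theorem exists_ae_liminf_eq [IsFiniteMeasure ν] (hg : SubadditiveProcess T g) (hT : Ergodic T ν)
    (hgm : ∀ n, AEMeasurable (g n) ν) (hgf : ∀ᵐ x ∂ν, g 1 x ≤ f x) :
    ∃ γ, ∀ᵐ x ∂ν, liminf (fun n : ℕ => g n x / (n : EReal)) atTop = γ := by
  refine exists_ae_eq_const_of_ae_le_comp hT ?_ ?_
  · simp only [liminf_eq_iSup_iInf_of_nat', div_eq_mul_inv]
    exact .iSup fun n => .iInf fun k => (hgm _).mul aemeasurable_const
  · filter_upwards [hgf] with x hx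
    refine liminf_div_natCast_le_of_le_add (f x) 1 0 fun n => ?_
    rw [add_comm n 1]
    exact (hg.add_le 1 n x).trans (add_le_add hx le_rfl)

end SubadditiveProcess

variable [IsProbabilityMeasure ν]

/-- If the constant `liminf` of the averages of `-f` were below `-q`, where `q > ∫ f`, then
integrating the domination of the process `birkhoffSum T (-f)` would give `q ≤ ∫ f`. -/
theorem ae_eventually_birkhoffSum_le (hT : Ergodic T ν) {f : X → ℝ} (hf : Integrable f ν) {c : ℝ}
    (hc : ∫ x, f x ∂ν < c) : ∀ᵐ x ∂ν, ∀ᶠ n : ℕ in atTop, birkhoffSum T f n x ≤ c * n := by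
  have hg := SubadditiveProcess.of_birkhoffSum T (-f)
  have hTm := hT.toMeasurePreserving
  have hgi := integrable_birkhoffSum hTm hf.neg
  have hgm (n : ℕ) := (hgi n).aemeasurable.coe_real_ereal
  have hgf : ∀ᵐ x ∂ν, ((birkhoffSum T (-f) 1 x : ℝ) : EReal) ≤ ((-f) x : ℝ) := by simp
  obtain ⟨γ, hγ⟩ := hg.exists_ae_liminf_eq hT hgm hgf
  obtain ⟨q, hfq, hqc⟩ := exists_between hc
  have hqγ : ((-q : ℝ) : EReal) ≤ γ := by
    by_contra! hlt
    obtain ⟨C, F, hF, -, hFε, hle⟩ := hg.exists_forall_le_add_birkhoffSum hTm hgm hf.neg hgf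
      (hγ.mono fun x hx => exists_le_mul_of_liminf_div_lt (hx.trans_lt hlt)) (sub_pos.2 hfq)
    have hint (m : ℕ) : m * (∫ x, (-f) x ∂ν) ≤ -q * m + C + m * ∫ x, F x ∂ν := by
      have hFm := integrable_birkhoffSum hTm hF m
      calc m * (∫ x, (-f) x ∂ν) = ∫ x, birkhoffSum T (-f) m x ∂ν :=
            (integral_birkhoffSum hTm hf.neg m).symm
        _ ≤ ∫ x, -q * m + C + birkhoffSum T F m x ∂ν :=
            integral_mono_ae (hgi m) ((integrable_const _).add hFm)
              (hle.mono fun x hx => EReal.coe_le_coe_iff.1 (hx m))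
        _ = -q * m + C + m * ∫ x, F x ∂ν := by
            rw [integral_add (integrable_const _) hFm, integral_birkhoffSum hTm hF]
            simp
    obtain ⟨m, hm⟩ := (eventually_le_mul_natCast (sub_pos.2 hFε) (C + 1)).exists
    have := hint m
    simp only [Pi.neg_apply, integral_neg] at this
    linarith
  filter_upwards [hγ] with x hx
  have hlt : ((-c : ℝ) : EReal) < γ :=
    (EReal.coe_lt_coe_iff.2 (neg_lt_neg hqc)).trans_le hqγ
  filter_upwards [eventually_lt_of_lt_liminf (hx ▸ hlt), eventually_gt_atTop 0] with n hn hpos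
  have := EReal.coe_le_coe_iff.1 ((coe_le_ereal_div_natCast_iff hpos _).1 hn.le)
  rw [birkhoffSum_neg] at this
  linarith

namespace SubadditiveProcess

variable {g : ℕ → X → EReal} {f : X → ℝ}

theorem ae_segmentSlopeLE (hg : SubadditiveProcess T g) (hT : Ergodic T ν)
    (hgm : ∀ n, AEMeasurable (g n) ν) (hf : Integrable f ν) (hgf : ∀ᵐ x ∂ν, g 1 x ≤ f x) {q : ℝ}
    (hq : ∀ᵐ x ∂ν, ∃ l : ℕ, 0 < l ∧ g l x ≤ ((q * l : ℝ) : EReal)) :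
    ∀ᵐ x ∂ν, SegmentSlopeLE T g q x := by
  refine ae_forall_pos_of_forall_pos_ae (fun x ε ε' hε h => h.mono fun n hn l m hlm =>
    (hn l m hlm).trans (EReal.coe_le_coe_iff.2 (by gcongr))) fun ε hε => ?_
  obtain ⟨C, F, hF, hF0, hFε, hle⟩ := hg.exists_forall_le_add_birkhoffSum hT.toMeasurePreserving
    hgm hf hgf hq (half_pos hε)
  filter_upwards [ae_iterate hT.toMeasurePreserving hle, ae_eventually_birkhoffSum_le hT hF hFε]
    with x hx hsum
  filter_upwards [hsum, eventually_le_mul_natCast (half_pos hε) C] with n hn hC l m hlm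
  refine (hx l m).trans (EReal.coe_le_coe_iff.2 ?_)
  linarith [birkhoffSum_iterate_le (T := T) hF0 x hlm]

theorem exists_ae_tendsto (hg : SubadditiveProcess T g) (hT : Ergodic T ν)
    (hgm : ∀ n, AEMeasurable (g n) ν) (hf : Integrable f ν) (hgf : ∀ᵐ x ∂ν, g 1 x ≤ f x) :
    ∃ γ ≠ ⊤, ∀ᵐ x ∂ν, Tendsto (fun n : ℕ => g n x / (n : EReal)) atTop (𝓝 γ) := by
  obtain ⟨γ, hγ⟩ := hg.exists_ae_liminf_eq hT hgm hgf
  have hlimsup : ∀ᵐ x ∂ν, limsup (fun n : ℕ => g n x / (n : EReal)) atTop ≤ γ := by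
    refine (ae_le_const_iff_forall_gt_measure_zero _ γ).2 fun b hb => ?_
    obtain ⟨q, hγq, hqb⟩ := EReal.lt_iff_exists_real_btwn.1 hb
    refine measure_eq_zero_iff_ae_notMem.2 ?_
    filter_upwards [hg.ae_segmentSlopeLE hT hgm hf hgf
      (hγ.mono fun x hx => exists_le_mul_of_liminf_div_lt (hx.trans_lt hγq))] with x hx
    exact fun hbx => (hx.limsup_div_le.trans_lt hqb).not_ge hbx
  refine ⟨γ, ?_, ?_⟩
  · obtain ⟨x, hinf, hgf, hsum⟩ := (hγ.and ((ae_iterate hT.toMeasurePreserving hgf).and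
      (ae_eventually_birkhoffSum_le hT hf (lt_add_one _)))).exists
    have hle : γ ≤ ((∫ x, f x ∂ν + 1 : ℝ) : EReal) := by
      rw [← hinf]
      refine liminf_le_of_frequently_le' (Eventually.frequently ?_)
      filter_upwards [hsum, eventually_gt_atTop 0] with n hn hpos
      exact (ereal_div_natCast_le_coe_iff hpos _).2
        ((hg.le_birkhoffSum hgf n).trans (EReal.coe_le_coe_iff.2 hn))
    exact ne_top_of_le_ne_top (EReal.coe_ne_top _) hle
  · filter_upwards [hγ, hlimsup] with x hinf hsup
    exact tendsto_of_le_liminf_of_limsup_le hinf.ge hsup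

end SubadditiveProcess

/-- Apart from its value `0` at time `0`, the process `n ↦ |f|` is constant in time, so its slopes
are arbitrarily small. -/
theorem ae_forall_pos_eventually_forall_lt_le (hT : Ergodic T ν) {f : X → ℝ}
    (hf : Integrable f ν) :
    ∀ᵐ x ∂ν, ∀ ε > 0, ∀ᶠ n : ℕ in atTop, ∀ m < n, f (T^[m] x) ≤ ε * n := by
  have hg := SubadditiveProcess.ite_eq_zero (T := T) (f := fun x => ((|f x| : ℝ) : EReal))
    fun x => EReal.coe_nonneg.2 (abs_nonneg (f x))
  have hgm (n : ℕ) : AEMeasurable (fun x => if n = 0 then 0 else ((|f x| : ℝ) : EReal)) ν := by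
    split_ifs
    exacts [aemeasurable_const, hf.abs.aemeasurable.coe_real_ereal]
  have hslope : ∀ᵐ x ∂ν, ∃ l : ℕ, 0 < l ∧
      (if l = 0 then 0 else ((|f x| : ℝ) : EReal)) ≤ ((1 * l : ℝ) : EReal) := by
    refine ae_of_all _ fun x => ?_
    obtain ⟨l, hl⟩ := exists_nat_ge |f x|
    refine ⟨l + 1, l.succ_pos, ?_⟩
    rw [if_neg l.succ_ne_zero, EReal.coe_le_coe_iff]
    push_cast
    linarith
  filter_upwards [hg.ae_segmentSlopeLE hT hgm hf.abs (by simp) hslope] with x hx ε hε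
  filter_upwards [hx (ε / 2) (half_pos hε), eventually_le_mul_natCast (half_pos hε) 1]
    with n hn h1 m hm
  have := hn m 1 hm
  simp only [one_ne_zero, if_false, EReal.coe_le_coe_iff, Nat.cast_one] at this
  linarith [le_abs_self (f (T^[m] x))]

/-- For each `n` the law of `u n ∘ T^[n]` is that of `u n`, although the two sequences may behave
differently along a realization. -/
theorem mem_of_ae_tendsto_of_ae_eventually_iterate_mem (hT : MeasurePreserving T ν ν)
    {E : Type*} [TopologicalSpace E] [MeasurableSpace E] [OpensMeasurableSpace E] {u : ℕ → X → E}
    (hu : ∀ n, Measurable (u n)) {L : E} (hL : ∀ᵐ x ∂ν, Tendsto (fun n => u n x) atTop (𝓝 L))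
    {s : Set E} (hs : IsClosed s) (hus : ∀ᵐ x ∂ν, ∀ᶠ n in atTop, u n (T^[n] x) ∈ s) : L ∈ s := by
  by_contra hLs
  have hum (n : ℕ) : MeasurableSet (u n ⁻¹' s) := hu n hs.measurableSet
  have hone : Tendsto (fun n => ν (T^[n] ⁻¹' (u n ⁻¹' s))) atTop (𝓝 (ν Set.univ)) :=
    tendsto_measure_of_ae_tendsto_indicator_of_isFiniteMeasure atTop MeasurableSet.univ
      (fun n => (hT.iterate n).measurable (hum n))
      (hus.mono fun x hx => hx.mono fun n hn => by simpa using hn)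
  have hzero : Tendsto (fun n => ν (u n ⁻¹' s)) atTop (𝓝 (ν ∅)) :=
    tendsto_measure_of_ae_tendsto_indicator_of_isFiniteMeasure atTop MeasurableSet.empty hum
      (hL.mono fun x hx => (hx.eventually (hs.isOpen_compl.mem_nhds hLs)).mono fun n hn => by
        simpa using hn)
  simp only [fun n => (hT.iterate n).measure_preimage (hum n).nullMeasurableSet] at hone
  simpa using tendsto_nhds_unique hone hzero

end ErgodicTheory

section MaxPlus

/-- The shift on two-sided sequences, under which `StationaryErgodic` asks the law of a random
sequence to be ergodic. -/
def seqShift {S : Type*} (s : ℤ → S) : ℤ → S := fun n => s (n + 1)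

theorem seqShift_iterate {S : Type*} (s : ℤ → S) (k : ℕ) (n : ℤ) :
    seqShift^[k] s n = s (n + k) := by
  induction k generalizing n with
  | zero => simp
  | succ k ih =>
    rw [Function.iterate_succ_apply', seqShift, ih]
    congr 1
    push_cast
    ring

variable {ι : Type*}

/-- The submatrices indexed by `c`, for a single realization; see `subMatrix`. -/
def restrictSeq (c : Set ι) (a : ℤ → MPMatrix ι) : ℤ → MPMatrix c := fun n i j => a n i j

theorem restrictSeq_iterate (c : Set ι) (a : ℤ → MPMatrix ι) (k : ℕ) :
    restrictSeq c (seqShift^[k] a) = seqShift^[k] (restrictSeq c a) := by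
  funext n i j
  simp only [restrictSeq, seqShift_iterate]

theorem le_mpVec (M : MPMatrix ι) (v : ι → EReal) (i j : ι) : M i j + v j ≤ mpVec M v i :=
  le_iSup (fun j => M i j + v j) j

theorem mpOrbit_seqShift_iterate (a : ℤ → MPMatrix ι) (k : ℕ) (l : ℤ) (n : ℕ) :
    mpOrbit (seqShift^[k] a) l n = mpOrbit a (l + k) n := by
  induction n with
  | zero => rfl
  | succ n ih =>
    simp only [mpOrbit, ih, seqShift_iterate]
    congr 2
    ring

theorem yVec_seqShift_iterate (a : ℤ → MPMatrix ι) (n : ℕ) :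
    yVec (seqShift^[n] a) n = xVec a n := by
  rw [yVec, mpOrbit_seqShift_iterate, neg_add_cancel, xVec]

theorem xVec_succ (a : ℤ → MPMatrix ι) (n : ℕ) : xVec a (n + 1) = mpVec (a n) (xVec a n) := by
  simp only [xVec, mpOrbit, zero_add]

theorem yVec_succ_seqShift (a : ℤ → MPMatrix ι) (n : ℕ) :
    yVec (seqShift a) (n + 1) = mpVec (a 0) (yVec a n) := by
  have h := mpOrbit_seqShift_iterate a 1 (-((n + 1 : ℕ) : ℤ)) (n + 1)
  have hn : -((n + 1 : ℕ) : ℤ) + (1 : ℕ) = -n := by push_cast; ring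
  rw [Function.iterate_one, hn] at h
  rw [yVec, h, mpOrbit, neg_add_cancel, yVec]

theorem xVec_add_le (a : ℤ → MPMatrix ι) (m n : ℕ) (i : ι) :
    xVec a (m + n) i ≤ (⨆ j, xVec a m j) + xVec (seqShift^[m] a) n i := by
  induction n generalizing i with
  | zero => simpa [xVec, mpOrbit] using le_iSup (xVec a m) i
  | succ n ih =>
    rw [← add_assoc, xVec_succ]
    refine iSup_le fun j => ?_
    calc a (m + n : ℕ) i j + xVec a (m + n) j
        ≤ a (m + n : ℕ) i j + ((⨆ j, xVec a m j) + xVec (seqShift^[m] a) n j) :=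
          add_le_add le_rfl (ih j)
      _ = (⨆ j, xVec a m j) + (seqShift^[m] a n i j + xVec (seqShift^[m] a) n j) := by
          rw [add_left_comm, seqShift_iterate, Nat.cast_add, add_comm (m : ℤ)]
      _ ≤ (⨆ j, xVec a m j) + xVec (seqShift^[m] a) (n + 1) i := by
          rw [xVec_succ]
          exact add_le_add le_rfl (le_mpVec _ _ i j)

theorem xVec_restrictSeq_le (c : Set ι) (a : ℤ → MPMatrix ι) (n : ℕ) (i : c) :
    xVec (restrictSeq c a) n i ≤ xVec a n i := by
  induction n generalizing i with
  | zero => exact le_rfl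
  | succ n ih =>
    rw [xVec_succ, xVec_succ]
    exact iSup_le fun j => (add_le_add le_rfl (ih j)).trans (le_mpVec _ _ (i : ι) (j : ι))

/-- An optimal path spends its first `m` steps in `c`; they come last in the product of matrices,
whence the shift by `k + 1`. -/
theorem xVec_le_restrictSeq_or_exists_exit [Finite ι] {c : Set ι} (a : ℤ → MPMatrix ι) (n : ℕ)
    (i : c) :
    xVec a n i ≤ xVec (restrictSeq c a) n i ∨
      ∃ k m, k + 1 + m = n ∧ ∃ i' ∈ c, ∃ j ∉ c,
        xVec a n i ≤ xVec (restrictSeq c (seqShift^[k + 1] a)) m i + (a k i' j + xVec a k j) := by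
  induction n generalizing i with
  | zero => exact .inl le_rfl
  | succ n ih =>
    have : Nonempty ι := ⟨i⟩
    obtain ⟨j, hj⟩ := exists_eq_ciSup_of_finite (f := fun j => a n i j + xVec a n j)
    have hxj : xVec a (n + 1) i = a n i j + xVec a n j := by rw [xVec_succ, mpVec, hj]
    rw [hxj]
    by_cases hjc : j ∈ c
    · rcases ih ⟨j, hjc⟩ with h | ⟨k, m, rfl, i', hi', j', hj', h⟩
      · refine .inl ((add_le_add le_rfl h).trans ?_)
        rw [xVec_succ]
        exact le_mpVec (restrictSeq c a n) _ i ⟨j, hjc⟩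
      · refine .inr ⟨k, m + 1, by lia, i', hi', j', hj', (add_le_add le_rfl h).trans ?_⟩
        rw [← add_assoc, xVec_succ]
        refine add_le_add ?_ le_rfl
        have := le_mpVec (restrictSeq c (seqShift^[k + 1] a) m)
          (xVec (restrictSeq c (seqShift^[k + 1] a)) m) i ⟨j, hjc⟩
        rwa [restrictSeq, seqShift_iterate, ← Nat.cast_add, add_comm m] at this
    · exact .inr ⟨n, 0, rfl, i, i.2, j, hjc, by simp [xVec, mpOrbit]⟩

/-- The maximal entry of `x(n,0)` for the submatrices indexed by `c`; its growth rate is the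
exponent of the component `c`. -/
noncomputable def blockMax (c : Set ι) (n : ℕ) (a : ℤ → MPMatrix ι) : EReal :=
  ⨆ i, xVec (restrictSeq c a) n i

theorem subadditiveProcess_blockMax (c : Set ι) :
    SubadditiveProcess (seqShift (S := MPMatrix ι)) (blockMax c) where
  zero_le a := iSup_le fun i => le_rfl
  add_le m n a := iSup_le fun i => (xVec_add_le _ m n i).trans <| add_le_add le_rfl <| by
    rw [blockMax, restrictSeq_iterate]
    exact le_iSup (xVec (seqShift^[m] (restrictSeq c a)) n) i

theorem measurable_entry (n : ℤ) (i j : ι) : Measurable fun a : ℤ → MPMatrix ι => a n i j := by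
  fun_prop

theorem measurable_restrictSeq (c : Set ι) : Measurable (restrictSeq (ι := ι) c) := by
  unfold restrictSeq
  fun_prop

theorem measurable_mpOrbit [Countable ι] (l : ℤ) (n : ℕ) :
    Measurable fun a : ℤ → MPMatrix ι => mpOrbit a l n := by
  induction n with
  | zero => exact measurable_const
  | succ n ih =>
    exact measurable_pi_lambda _ fun i => .iSup fun j =>
      (measurable_entry _ i j).add ((measurable_pi_apply j).comp ih)

theorem measurable_blockMax [Countable ι] (c : Set ι) (n : ℕ) :
    Measurable (blockMax (ι := ι) c n) :=
  .iSup fun i => (measurable_pi_apply i).comp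
    ((measurable_mpOrbit 0 n).comp (measurable_restrictSeq c))

/-- The positive part of the maximal entry of the matrix at time `0`: the integrable majorant of the
processes `blockMax c`. -/
noncomputable def entryBound (a : ℤ → MPMatrix ι) : ℝ := ((⨆ i, ⨆ j, a 0 i j) ⊔ 0).toReal

theorem measurable_entryBound [Countable ι] : Measurable (entryBound (ι := ι)) :=
  ((Measurable.iSup fun i => Measurable.iSup fun j => measurable_entry 0 i j).sup
    measurable_const).ereal_toReal

theorem le_entryBound [Finite ι] {a : ℤ → MPMatrix ι} (h : ∀ i j, a 0 i j ≠ ⊤) (i j : ι) :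
    a 0 i j ≤ (entryBound a : EReal) := by
  have : Nonempty ι := ⟨i⟩
  have htop : (⨆ i, ⨆ j, a 0 i j) ⊔ 0 ≠ ⊤ := by
    obtain ⟨i', hi'⟩ := exists_eq_ciSup_of_finite (f := fun i => ⨆ j, a 0 i j)
    obtain ⟨j', hj'⟩ := exists_eq_ciSup_of_finite (f := fun j => a 0 i' j)
    rw [← hi', ← hj']
    exact (max_lt (lt_top_iff_ne_top.2 (h i' j')) EReal.zero_lt_top).ne
  rw [entryBound, EReal.coe_toReal htop (EReal.bot_lt_zero.trans_le le_sup_right).ne']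
  exact le_sup_of_le_left (le_iSup_of_le i (le_iSup (a 0 i) j))

theorem blockMax_one_le [Finite ι] {a : ℤ → MPMatrix ι} (h : ∀ i j, a 0 i j ≠ ⊤) (c : Set ι) :
    blockMax c 1 a ≤ (entryBound a : EReal) :=
  iSup_le fun i => iSup_le fun j => by
    simpa [mpOrbit, restrictSeq] using le_entryBound h (i : ι) (j : ι)

variable [Finite ι] {a : ℤ → MPMatrix ι} {q : ℝ}

theorem segmentSlopeLE_xVec_of_forall_exit {c : Set ι}
    (hc : SegmentSlopeLE seqShift (blockMax c) q a)
    (ha : ∀ ε > 0, ∀ᶠ n : ℕ in atTop, ∀ k : ℕ, k < n → ∀ i j, a k i j ≤ ((ε * n : ℝ) : EReal))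
    (hexit : ∀ i ∈ c, ∀ j ∉ c, (∃ k : ℕ, a k i j ≠ ⊥) →
      SegmentSlopeLE seqShift (fun m a => xVec a m j) q a) {i : ι} (hi : i ∈ c) :
    SegmentSlopeLE seqShift (fun m a => xVec a m i) q a := by
  intro ε hε
  obtain ⟨δ, hδ, rfl⟩ : ∃ δ > 0, ε = 4 * δ := ⟨ε / 4, by positivity, by ring⟩
  have hrows : ∀ᶠ n : ℕ in atTop, ∀ j, (∃ i ∈ c, j ∉ c ∧ ∃ k : ℕ, a k i j ≠ ⊥) →
      ∀ l m : ℕ, l + m ≤ n → xVec (seqShift^[l] a) m j ≤ ((q * m + δ * n : ℝ) : EReal) :=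
    eventually_all.2 fun j => eventually_imp_distrib_left.2 fun ⟨i, hi, hj, hij⟩ =>
      hexit i hi j hj hij δ hδ
  filter_upwards [hc δ hδ, ha δ hδ, hrows, eventually_le_mul_natCast hδ (-q)]
    with n hblock hentry hrow hq l m hlm
  have hblock (l m : ℕ) (h : l + m ≤ n) : xVec (restrictSeq c (seqShift^[l] a)) m ⟨i, hi⟩ ≤
      ((q * m + δ * n : ℝ) : EReal) := (le_iSup (xVec _ m) _).trans (hblock l m h)
  have hδn : 0 ≤ δ * n := by positivity
  rcases xVec_le_restrictSeq_or_exists_exit (seqShift^[l] a) m ⟨i, hi⟩ with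
    h | ⟨k, m', rfl, i', hi', j, hj, h⟩
  · exact h.trans ((hblock l m hlm).trans (EReal.coe_le_coe_iff.2 (by linarith)))
  rw [seqShift_iterate, ← Nat.cast_add, ← Function.iterate_add_apply] at h
  refine h.trans ?_
  by_cases hbot : a (k + l : ℕ) i' j = ⊥
  · rw [hbot, EReal.bot_add, EReal.add_bot]
    exact bot_le
  calc _ ≤ ((q * m' + δ * n : ℝ) : EReal) + ((δ * n : ℝ) + (q * k + δ * n : ℝ)) :=
        add_le_add (hblock _ m' (by lia)) (add_le_add (hentry _ (by lia) i' j)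
          (hrow j ⟨i', hi', hj, _, hbot⟩ l k (by lia)))
    _ ≤ _ := by
        rw [← EReal.coe_add, ← EReal.coe_add, EReal.coe_le_coe_iff]
        push_cast
        linarith

theorem segmentSlopeLE_xVec_of_forall_reaches {r : ι → ι → Prop}
    (hr : ∀ (k : ℕ) i j, ¬ r i j → a k i j = ⊥)
    (ha : ∀ ε > 0, ∀ᶠ n : ℕ in atTop, ∀ k : ℕ, k < n → ∀ i j, a k i j ≤ ((ε * n : ℝ) : EReal))
    {i : ι} (hq : ∀ c, IsSCC r c → Reaches r i c → SegmentSlopeLE seqShift (blockMax c) q a) :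
    SegmentSlopeLE seqShift (fun m a => xVec a m i) q a := by
  induction hs : {j | Relation.ReflTransGen r i j} using WellFoundedLT.induction generalizing i with
  | _ s ih =>
  subst hs
  set c : Set ι := {j | Relation.ReflTransGen r i j ∧ Relation.ReflTransGen r j i}
  have hic : i ∈ c := ⟨.refl, .refl⟩
  refine segmentSlopeLE_xVec_of_forall_exit (hq c ⟨i, rfl⟩ ⟨i, hic, .refl⟩) ha
    (fun i' hi' j hj ⟨k, hk⟩ => ?_) hic
  have hij : Relation.ReflTransGen r i j := hi'.1.tail (not_not.1 (mt (hr k i' j) hk))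
  have hji : ¬ Relation.ReflTransGen r j i := fun hji => hj ⟨hij, hji⟩
  exact ih _ ⟨fun k hk => hij.trans hk, fun hsub => hji (hsub .refl)⟩
    (fun c' hc' ⟨k, hk, hjk⟩ => hq c' hc' ⟨k, hk, hij.trans hjk⟩) rfl

end MaxPlus

section RandomMatrices

variable {ι : Type*} {ν : Measure (ℤ → MPMatrix ι)} {L : ι → EReal}

/-- Choose a realization where the entry is finite: there, one step of the recursion for `y` costs
an additive constant. -/
theorem le_of_entry_ne_bot (hν : MeasurePreserving seqShift ν ν)
    (htop : ∀ᵐ a ∂ν, ∀ i j, a 0 i j ≠ ⊤)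
    (hL : ∀ᵐ a ∂ν, ∀ i, Tendsto (fun n : ℕ => yVec a n i / (n : EReal)) atTop (𝓝 (L i)))
    {i j : ι} (hij : ν {a | a 0 i j ≠ ⊥} ≠ 0) : L j ≤ L i := by
  obtain ⟨a, hbot, htop, hLa, hLTa⟩ := ((frequently_ae_iff.2 hij).and_eventually
    (htop.and (hL.and (hν.quasiMeasurePreserving.ae hL)))).exists
  have hentry : ((a 0 i j).toReal : EReal) = a 0 i j := EReal.coe_toReal (htop i j) hbot
  rw [← (hLa j).liminf_eq, ← (hLTa i).liminf_eq]
  refine liminf_div_natCast_le_of_le_add (-(a 0 i j).toReal) 0 1 fun n => ?_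
  rw [yVec_succ_seqShift]
  calc yVec a n j
    _ = ((-(a 0 i j).toReal : ℝ) : EReal) + (a 0 i j + yVec a n j) := by
        rw [← add_assoc, ← hentry, ← EReal.coe_add]
        simp
    _ ≤ _ := add_le_add le_rfl (le_mpVec _ _ i j)

variable [IsProbabilityMeasure ν]

theorem mem_of_ae_tendsto_yVec [Countable ι] (hν : MeasurePreserving seqShift ν ν)
    (hL : ∀ᵐ a ∂ν, ∀ i, Tendsto (fun n : ℕ => yVec a n i / (n : EReal)) atTop (𝓝 (L i)))
    {s : Set (ι → EReal)} (hs : IsClosed s)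
    (hx : ∀ᵐ a ∂ν, ∀ᶠ n : ℕ in atTop, (fun i => xVec a n i / (n : EReal)) ∈ s) : L ∈ s :=
  mem_of_ae_tendsto_of_ae_eventually_iterate_mem hν
    (u := fun n a i => yVec a n i / (n : EReal))
    (fun n => measurable_pi_lambda _ fun i =>
      ((measurable_pi_apply i).comp (measurable_mpOrbit _ n)).mul measurable_const)
    (hL.mono fun a ha => tendsto_pi_nhds.2 ha) hs
    (by simpa only [yVec_seqShift_iterate] using hx)

theorem le_of_ae_limsup_xVec_le [Countable ι] (hν : MeasurePreserving seqShift ν ν)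
    (hL : ∀ᵐ a ∂ν, ∀ i, Tendsto (fun n : ℕ => yVec a n i / (n : EReal)) atTop (𝓝 (L i)))
    {i : ι} {q : EReal}
    (hq : ∀ᵐ a ∂ν, limsup (fun n : ℕ => xVec a n i / (n : EReal)) atTop ≤ q) : L i ≤ q := by
  refine le_of_forall_gt_imp_ge_of_dense fun p hp => ?_
  refine mem_of_ae_tendsto_yVec hν hL (s := {v | v i ≤ p})
    (isClosed_le (continuous_apply i) continuous_const) (hq.mono fun a ha => ?_)
  exact (eventually_lt_of_limsup_lt (ha.trans_lt hp)).mono fun n hn => hn.le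

variable [Finite ι]

theorem le_of_ae_tendsto_blockMax (hν : MeasurePreserving seqShift ν ν)
    (hL : ∀ᵐ a ∂ν, ∀ i, Tendsto (fun n : ℕ => yVec a n i / (n : EReal)) atTop (𝓝 (L i)))
    {c : Set ι} {γ : EReal}
    (hγ : ∀ᵐ a ∂ν, Tendsto (fun n : ℕ => blockMax c n a / (n : EReal)) atTop (𝓝 γ)) {M : EReal}
    (hM : ∀ i ∈ c, L i ≤ M) : γ ≤ M := by
  refine EReal.ge_of_forall_gt_iff_ge.1 fun p hp => ?_
  have hclosed : IsClosed (⋃ i ∈ c, {v : ι → EReal | (p : EReal) ≤ v i}) :=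
    c.toFinite.isClosed_biUnion fun i _ => isClosed_le continuous_const (continuous_apply i)
  have hmem := mem_of_ae_tendsto_yVec hν hL hclosed <| hγ.mono fun a ha => by
    filter_upwards [ha.eventually_const_lt hp, eventually_gt_atTop 0] with n hn hpos
    by_contra! h
    simp only [Set.mem_iUnion, Set.mem_ofPred_eq, not_exists,
      coe_le_ereal_div_natCast_iff hpos, not_le] at h
    exact hn.not_ge ((ereal_div_natCast_le_coe_iff hpos p).2
      (iSup_le fun i => (xVec_restrictSeq_le c a n i).trans (h i i.2).le))
  simp only [Set.mem_iUnion] at hmem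
  obtain ⟨i, hi, hpi⟩ := hmem
  exact hpi.trans (hM i hi)

theorem exists_ae_tendsto_blockMax (hν : Ergodic seqShift ν)
    (htop : ∀ᵐ a ∂ν, ∀ i j, a 0 i j ≠ ⊤) (hint : Integrable entryBound ν) (c : Set ι) :
    ∃ γ ≠ ⊤, ∀ᵐ a ∂ν, Tendsto (fun n : ℕ => blockMax c n a / (n : EReal)) atTop (𝓝 γ) :=
  (subadditiveProcess_blockMax c).exists_ae_tendsto hν
    (fun n => (measurable_blockMax c n).aemeasurable) hint
    (htop.mono fun _ ha => blockMax_one_le ha c)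

theorem ae_forall_pos_eventually_entry_le (hν : Ergodic seqShift ν)
    (htop : ∀ᵐ a ∂ν, ∀ i j, a 0 i j ≠ ⊤) (hint : Integrable entryBound ν) :
    ∀ᵐ a ∂ν, ∀ ε > 0, ∀ᶠ n : ℕ in atTop, ∀ k : ℕ, k < n → ∀ i j,
      a k i j ≤ ((ε * n : ℝ) : EReal) := by
  filter_upwards [ae_forall_pos_eventually_forall_lt_le hν hint,
    ae_iterate hν.toMeasurePreserving htop] with a hsub htop ε hε
  refine (hsub ε hε).mono fun n hn k hk i j => ?_
  have hentry := le_entryBound (htop k) i j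
  rw [seqShift_iterate, zero_add] at hentry
  exact hentry.trans (EReal.coe_le_coe_iff.2 (hn k hk))

theorem ae_limsup_xVec_le (hν : Ergodic seqShift ν) (htop : ∀ᵐ a ∂ν, ∀ i j, a 0 i j ≠ ⊤)
    (hint : Integrable entryBound ν) {r : ι → ι → Prop}
    (hr : ∀ i j, ¬ r i j → ∀ᵐ a ∂ν, a 0 i j = ⊥) {γ : Set ι → EReal}
    (hγ : ∀ c, ∀ᵐ a ∂ν, Tendsto (fun n : ℕ => blockMax c n a / (n : EReal)) atTop (𝓝 (γ c)))
    {i : ι} {q : ℝ} (hq : ∀ c, IsSCC r c → Reaches r i c → γ c < q) :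
    ∀ᵐ a ∂ν, limsup (fun n : ℕ => xVec a n i / (n : EReal)) atTop ≤ q := by
  have hslope (c : Set ι) (hc : IsSCC r c ∧ Reaches r i c) :
      ∀ᵐ a ∂ν, SegmentSlopeLE seqShift (blockMax c) q a :=
    (subadditiveProcess_blockMax c).ae_segmentSlopeLE hν
      (fun n => (measurable_blockMax c n).aemeasurable) hint
      (htop.mono fun _ ha => blockMax_one_le ha c)
      ((hγ c).mono fun a ha => exists_le_mul_of_liminf_div_lt
        (ha.liminf_eq.trans_lt (hq c hc.1 hc.2)))
  have hbot : ∀ᵐ a ∂ν, ∀ i j, ¬ r i j → a 0 i j = ⊥ :=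
    ae_all_iff.2 fun i => ae_all_iff.2 fun j => eventually_imp_distrib_left.2 (hr i j)
  filter_upwards [ae_all_iff.2 fun c => eventually_imp_distrib_left.2 (hslope c),
    ae_iterate hν.toMeasurePreserving hbot, ae_forall_pos_eventually_entry_le hν htop hint]
    with a hslope hbot hentry
  refine (segmentSlopeLE_xVec_of_forall_reaches (r := r) (fun k i j hij => ?_) hentry
    fun c hc hic => hslope c ⟨hc, hic⟩).limsup_div_le
  simpa only [seqShift_iterate, zero_add] using hbot k i j hij

theorem isGreatest_of_ae_tendsto_yVec (hν : Ergodic seqShift ν)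
    (htop : ∀ᵐ a ∂ν, ∀ i j, a 0 i j ≠ ⊤) (hint : Integrable entryBound ν) {r : ι → ι → Prop}
    (hr : ∀ i j, r i j ↔ ν {a | a 0 i j ≠ ⊥} ≠ 0) {γ : Set ι → EReal}
    (hγ : ∀ c, ∀ᵐ a ∂ν, Tendsto (fun n : ℕ => blockMax c n a / (n : EReal)) atTop (𝓝 (γ c)))
    (hL : ∀ᵐ a ∂ν, ∀ i, Tendsto (fun n : ℕ => yVec a n i / (n : EReal)) atTop (𝓝 (L i)))
    (i : ι) : IsGreatest {g | ∃ c, IsSCC r c ∧ Reaches r i c ∧ g = γ c} (L i) := by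
  have hTm := hν.toMeasurePreserving
  have hanti {i j : ι} (hij : Relation.ReflTransGen r i j) : L j ≤ L i :=
    Relation.reflTransGen_le_of_le (r := L ⁻¹'o (· ≥ ·))
      (fun i j hij => le_of_entry_ne_bot hTm htop hL ((hr i j).1 hij)) i j hij
  have hupper (c : Set ι) : IsSCC r c → Reaches r i c → γ c ≤ L i := by
    rintro ⟨k, rfl⟩ ⟨j, hj, hij⟩
    exact le_of_ae_tendsto_blockMax hTm hL (hγ _) fun l hl =>
      hanti (hij.trans (hj.2.trans hl.1))
  obtain ⟨c, ⟨hc, hic⟩, hmax⟩ := Set.exists_max_image {c : Set ι | IsSCC r c ∧ Reaches r i c} γ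
    (Set.toFinite _) ⟨_, ⟨i, rfl⟩, i, ⟨.refl, .refl⟩, .refl⟩
  have hlower : L i ≤ γ c := EReal.le_of_forall_lt_iff_le.1 fun q hq =>
    le_of_ae_limsup_xVec_le hTm hL <| ae_limsup_xVec_le hν htop hint
      (fun i j hij => ae_iff.2 (not_not.1 (mt (hr i j).2 hij))) hγ
      fun c' hc' hic' => (hmax c' ⟨hc', hic'⟩).trans_lt hq
  exact ⟨⟨c, hc, hic, hlower.antisymm (hupper c hc hic)⟩,
    fun g ⟨c, hc, hic, hg⟩ => hg.trans_le (hupper c hc hic)⟩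

end RandomMatrices

theorem IsMaxLyapunov.maxLyapunov_eq {Ω ι : Type*} [MeasurableSpace Ω] {μ : Measure Ω} [NeZero μ]
    {A : ℤ → Ω → MPMatrix ι} {g : EReal} (h : IsMaxLyapunov μ A g) : maxLyapunov μ A = g := by
  have hex : ∃ g, IsMaxLyapunov μ A g := ⟨g, h⟩
  rw [maxLyapunov, dif_pos hex]
  obtain ⟨ω, hspec, hω⟩ := (hex.choose_spec.and h).exists
  exact tendsto_nhds_unique hspec hω

section Law

variable {Ω ι : Type*} [MeasurableSpace Ω] {μ : Measure Ω} {A : ℤ → Ω → MPMatrix ι}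

theorem arcRel_iff_map_ne_zero (hA : AEMeasurable (fun ω n => A n ω) μ) {i j : ι} :
    arcRel μ A i j ↔ μ.map (fun ω n => A n ω) {a | a 0 i j ≠ ⊥} ≠ 0 := by
  have hbot : MeasurableSet {a : ℤ → MPMatrix ι | a 0 i j ≠ ⊥} :=
    measurable_entry 0 i j (measurableSet_singleton ⊥).compl
  rw [Measure.map_apply_of_aemeasurable hA hbot, arcRel, pos_iff_ne_zero]
  rfl

theorem ae_map_entry_ne_top [Countable ι] (hA : AEMeasurable (fun ω n => A n ω) μ)
    (htop : ∀ᵐ ω ∂μ, ∀ i j, A 0 ω i j ≠ ⊤) :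
    ∀ᵐ a ∂μ.map (fun ω n => A n ω), ∀ i j, a 0 i j ≠ ⊤ :=
  ae_all_iff.2 fun i => ae_all_iff.2 fun j =>
    (ae_map_iff hA (measurable_entry 0 i j (measurableSet_singleton ⊤).compl)).2
      (htop.mono fun _ hω => hω i j)

theorem ae_map_tendsto_yVec [Countable ι] (hA : AEMeasurable (fun ω n => A n ω) μ) {L : ι → EReal}
    (hL : ∀ᵐ ω ∂μ, ∀ i,
      Tendsto (fun n : ℕ => yVec (fun k => A k ω) n i / (n : EReal)) atTop (𝓝 (L i))) :
    ∀ᵐ a ∂μ.map (fun ω n => A n ω), ∀ i,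
      Tendsto (fun n : ℕ => yVec a n i / (n : EReal)) atTop (𝓝 (L i)) :=
  ae_all_iff.2 fun i => (ae_map_iff hA (measurableSet_tendsto _ fun n =>
    ((measurable_pi_apply i).comp (measurable_mpOrbit _ n)).mul measurable_const)).2
      (hL.mono fun _ hω => hω i)

end Law

theorem limit_formula_of_deterministic_y_limit_general {ι Ω : Type*} [Finite ι]
    [MeasurableSpace Ω] (μ : Measure Ω) [IsProbabilityMeasure μ] (A : ℤ → Ω → MPMatrix ι)
    (hmeas : ∀ n, AEMeasurable (A n) μ) (hnotop : ∀ᵐ ω ∂μ, ∀ i j, A 0 ω i j ≠ ⊤)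
    (herg : StationaryErgodic μ A)
    (hint : Integrable (fun ω => ((⨆ i, ⨆ j, A 0 ω i j) ⊔ 0).toReal) μ) (L : ι → EReal)
    (hL : ∀ᵐ ω ∂μ, ∀ i,
      Tendsto (fun n : ℕ => yVec (fun k => A k ω) n i / (n : EReal)) atTop (𝓝 (L i))) :
    (∀ c : Set ι, IsSCC (arcRel μ A) c →
      IsMaxLyapunov μ (subMatrix A c) (maxLyapunov μ (subMatrix A c)) ∧
        maxLyapunov μ (subMatrix A c) ≠ ⊤) ∧
    ∀ i, IsGreatest {g : EReal | ∃ c : Set ι, IsSCC (arcRel μ A) c ∧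
        Reaches (arcRel μ A) i c ∧ g = maxLyapunov μ (subMatrix A c)} (L i) := by
  have hA : AEMeasurable (fun ω n => A n ω) μ := aemeasurable_pi_lambda _ hmeas
  have := Measure.isProbabilityMeasure_map hA
  have htop := ae_map_entry_ne_top hA hnotop
  have hint : Integrable entryBound (μ.map fun ω n => A n ω) :=
    (integrable_map_measure measurable_entryBound.aestronglyMeasurable hA).2 hint
  choose γ hγtop hγ using exists_ae_tendsto_blockMax herg htop hint
  have hLyap (c : Set ι) : IsMaxLyapunov μ (subMatrix A c) (γ c) := ae_of_ae_map hA (hγ c)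
  simp only [(hLyap _).maxLyapunov_eq]
  exact ⟨fun c _ => ⟨hLyap c, hγtop c⟩, isGreatest_of_ae_tendsto_yVec herg htop hint
    (fun _ _ => arcRel_iff_map_ne_zero hA) hγ (ae_map_tendsto_yVec hA hL)⟩

/-- If `(1/n) y(n,0)` converges almost surely to a deterministic vector `L`, then the exponents
`γ^{(c)}` of the strongly connected components are well defined in `ℝ ∪ {-∞}`, and
`L i = max {γ^{(c)} : i → c}` for every `i`. -/
theorem limit_formula_of_deterministic_y_limit
    {d : ℕ} {Ω : Type*} [MeasurableSpace Ω] (μ : Measure Ω) [IsProbabilityMeasure μ]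
    (A : ℤ → Ω → MPMatrix (Fin d)) (hmeas : ∀ n, Measurable (A n))
    (hnotop : ∀ n ω i j, A n ω i j ≠ ⊤)
    (herg : StationaryErgodic μ A)
    (hrow : ∀ᵐ ω ∂μ, ∀ i, ∃ j, A 0 ω i j ≠ ⊥)
    (hint : Integrable (fun ω => ((⨆ i, ⨆ j, A 0 ω i j) ⊔ 0).toReal) μ)
    (L : Fin d → EReal)
    (hL : ∀ᵐ ω ∂μ, ∀ i,
      Tendsto (fun n : ℕ => yVec (fun k => A k ω) n i / (n : EReal)) atTop (𝓝 (L i))) :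
    (∀ c : Set (Fin d), IsSCC (arcRel μ A) c →
      IsMaxLyapunov μ (subMatrix A c) (maxLyapunov μ (subMatrix A c)) ∧
        maxLyapunov μ (subMatrix A c) ≠ ⊤) ∧
    ∀ i, IsGreatest {g : EReal | ∃ c : Set (Fin d), IsSCC (arcRel μ A) c ∧
        Reaches (arcRel μ A) i c ∧ g = maxLyapunov μ (subMatrix A c)} (L i) :=
  limit_formula_of_deterministic_y_limit_general μ A (fun n => (hmeas n).aemeasurable)
    (ae_of_all _ fun ω => hnotop 0 ω) herg hint L hL
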